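/- Assume the weights are symmetric (w(x,y) = w(y,x)) and the graph G with adjacency x ∼ y iff x ≠ y and w(x,y) > 0 is connected, and suppose G satisfies the condition CDE(n,−K) for some n > 0 and K > 0. Let R > 1, let x₀ ∈ V, and let u : V × ℝ → ℝ be a positive function, differentiable in t, such that Δu(·,t)(x) = ∂_t u(x,t) for all t > 0 and all x with dist(x₀,x) < 2R. Then for every α with 0 < α < 1, every t > 0, and every x with dist(x₀,x) < R: (1−α)Γ(√u(·,t))(x)/u(x,t) − (∂_t √(u(x,t)))/√(u(x,t)) ≤ min{ D_μ , n/((1−α)·2t) + n(2+D_w)D_μ/((1−α)R) + Kn/(2α) }. -/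

import Mathlib

open Finset

/-- The μ-Laplacian on a finite weighted graph:
`Δf(x) = (1/μ(x)) ∑_y w(x,y) (f(y) - f(x))`. -/
noncomputable def graphLap {V : Type*} [Fintype V] (w : V → V → ℝ) (μ : V → ℝ)
    (f : V → ℝ) (x : V) : ℝ :=
  (1 / μ x) * ∑ y, w x y * (f y - f x)

/-- The gradient form:
`Γ(f,g)(x) = (1/(2μ(x))) ∑_y w(x,y) (f(y) - f(x)) (g(y) - g(x))`. -/
noncomputable def graphGamma {V : Type*} [Fintype V] (w : V → V → ℝ) (μ : V → ℝ)
    (f g : V → ℝ) (x : V) : ℝ :=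
  (1 / (2 * μ x)) * ∑ y, w x y * (f y - f x) * (g y - g x)

/-- The iterated gradient form `Γ₂(f) = (1/2)(ΔΓ(f) - 2Γ(f, Δf))`. -/
noncomputable def graphGamma2 {V : Type*} [Fintype V] (w : V → V → ℝ) (μ : V → ℝ)
    (f : V → ℝ) (x : V) : ℝ :=
  (1 / 2) * (graphLap w μ (graphGamma w μ f f) x - 2 * graphGamma w μ f (graphLap w μ f) x)

/-- The modified iterated gradient form `Γ̃₂(f) = Γ₂(f) - Γ(f, Γ(f)/f)`. -/
noncomputable def graphGamma2Tilde {V : Type*} [Fintype V] (w : V → V → ℝ) (μ : V → ℝ)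
    (f : V → ℝ) (x : V) : ℝ :=
  graphGamma2 w μ f x - graphGamma w μ f (fun z => graphGamma w μ f f z / f z) x

/-- The exponential curvature-dimension condition `CDE(n, -K)`: for every vertex `x`
and every positive function `f` with `Δf(x) < 0`,
`Γ̃₂(f)(x) ≥ (1/n)(Δf(x))² - K Γ(f)(x)`. -/
def CDEneg {V : Type*} [Fintype V] (w : V → V → ℝ) (μ : V → ℝ) (n K : ℝ) : Prop :=
  ∀ x : V, ∀ f : V → ℝ, (∀ z, 0 < f z) → graphLap w μ f x < 0 →
    graphGamma2Tilde w μ f x ≥ (1 / n) * (graphLap w μ f x) ^ 2 - K * graphGamma w μ f f x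

/-!
Write `f = √u` and `Q = ((1 - α) Γ(f) - Δ(f²) / 2) / f²`; inside the ball this is the left-hand
side. The bound by `D_μ` is pointwise: `f² Q = -(α Γ(f) + f Δf)` and `-Δf ≤ D_μ f`.

For the other bound, apply the maximum principle to `s φ Q`, where `φ` is a radial cutoff. Since `u`
solves the heat equation, `(Δ - ∂ₛ)(f² Q) = 2 (1 - α) Γ̃₂(f)`. Where `Q > 0` one has `Δf < 0`, and
once `Q > K n / (2 α)` the curvature condition bounds the right-hand side below by a multiple of
`f² Q²`. The cutoff varies by at most `1 / R` along an edge, and `Δf ≤ 0` forces `f y ≤ D_w f x` for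
every neighbour `y` of `x`, so the cutoff costs only an error of order `D_w D_μ / R`.

This needs the heat equation at the neighbours of the maximum, hence `φ > 2 / R` there. If instead
`φ ≤ 2 / R`, testing the curvature condition on a function that is constant off one vertex gives
`Q ≤ deg / μ ≤ n (9 D_μ / 8 + K / 2)`, and the factor `φ` makes this small enough.
-/

section Calculus

variable {V : Type*} [Fintype V] {w : V → V → ℝ} {μ : V → ℝ} {x : V}

lemma graphLap_congr {f g : V → ℝ} (hx : f x = g x) (hy : ∀ y, w x y ≠ 0 → f y = g y) :
    graphLap w μ f x = graphLap w μ g x := by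
  unfold graphLap
  congr 1
  refine sum_congr rfl fun y _ => ?_
  by_cases h : w x y = 0
  · simp [h]
  · rw [hx, hy y h]

lemma graphGamma_congr_right (f : V → ℝ) {g h : V → ℝ} (hx : g x = h x)
    (hy : ∀ y, w x y ≠ 0 → g y = h y) : graphGamma w μ f g x = graphGamma w μ f h x := by
  unfold graphGamma
  congr 1
  refine sum_congr rfl fun y _ => ?_
  by_cases hxy : w x y = 0
  · simp [hxy]
  · rw [hx, hy y hxy]

lemma graphLap_sub (f g : V → ℝ) :
    graphLap w μ (fun z => f z - g z) x = graphLap w μ f x - graphLap w μ g x := by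
  simp only [graphLap, mul_sum, ← sum_sub_distrib]
  exact sum_congr rfl fun y _ => by ring

lemma graphLap_const_mul (c : ℝ) (f : V → ℝ) :
    graphLap w μ (fun z => c * f z) x = c * graphLap w μ f x := by
  simp only [graphLap, mul_sum]
  exact sum_congr rfl fun y _ => by ring

lemma graphGamma_add_right (f g h : V → ℝ) :
    graphGamma w μ f (fun z => g z + h z) x = graphGamma w μ f g x + graphGamma w μ f h x := by
  simp only [graphGamma, mul_sum, ← sum_add_distrib]
  exact sum_congr rfl fun y _ => by ring

lemma graphLap_mul_sub (h g : V → ℝ) :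
    graphLap w μ (fun z => h z * g z) x - h x * graphLap w μ g x
      = (1 / μ x) * ∑ y, w x y * ((h y - h x) * g y) := by
  simp only [graphLap, mul_sum, ← sum_sub_distrib]
  exact sum_congr rfl fun y _ => by ring

lemma graphLap_sq (f : V → ℝ) :
    graphLap w μ (fun z => f z ^ 2) x = 2 * f x * graphLap w μ f x + 2 * graphGamma w μ f f x := by
  simp only [graphLap, graphGamma, mul_sum, ← sum_add_distrib]
  exact sum_congr rfl fun y _ => by ring

lemma graphGamma2Tilde_eq_sum (f : V → ℝ) :
    graphGamma2Tilde w μ f x = (1 / (2 * μ x)) * ∑ y, w x y *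
      ((graphGamma w μ f f y - graphGamma w μ f f x)
        - (f y - f x) * (graphLap w μ f y - graphLap w μ f x)
        - (f y - f x) * (graphGamma w μ f f y / f y - graphGamma w μ f f x / f x)) := by
  rw [graphGamma2Tilde, graphGamma2]
  generalize graphGamma w μ f f = Γ, graphLap w μ f = Δ
  simp only [graphLap, graphGamma, mul_sum, ← sum_sub_distrib]
  exact sum_congr rfl fun y _ => by ring

lemma graphGamma_self_nonneg (hw : ∀ y, 0 ≤ w x y) (hμ : 0 ≤ μ x) (f : V → ℝ) :
    0 ≤ graphGamma w μ f f x := by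
  refine mul_nonneg (by positivity) (sum_nonneg fun y _ => ?_)
  rw [mul_assoc]
  exact mul_nonneg (hw y) (mul_self_nonneg _)

lemma neg_graphLap_le_degree_mul (hw : ∀ y, 0 ≤ w x y) (hμ : 0 ≤ μ x) {f : V → ℝ}
    (hf : ∀ y, 0 ≤ f y) : -graphLap w μ f x ≤ (∑ y, w x y) / μ x * f x := by
  have hsum : 0 ≤ ∑ y, w x y * f y := sum_nonneg fun y _ => mul_nonneg (hw y) (hf y)
  calc -graphLap w μ f x
      = (∑ y, w x y) / μ x * f x - 1 / μ x * ∑ y, w x y * f y := by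
        simp only [graphLap, mul_sub, sum_sub_distrib, ← sum_mul]
        ring
    _ ≤ (∑ y, w x y) / μ x * f x := sub_le_self _ (by positivity)

lemma sum_mul_le_degree_mul (hμ : 0 < μ x) {f : V → ℝ} (hΔ : graphLap w μ f x ≤ 0) :
    ∑ y, w x y * f y ≤ (∑ y, w x y) * f x := by
  have h : ∑ y, w x y * (f y - f x) ≤ 0 := nonpos_of_mul_nonpos_right hΔ (by positivity)
  simpa only [mul_sub, sum_sub_distrib, ← sum_mul, sub_nonpos] using h

lemma le_mul_of_graphLap_nonpos (hw : ∀ y, 0 ≤ w x y) (hμ : 0 < μ x) {f : V → ℝ}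
    (hf : ∀ y, 0 ≤ f y) (hΔ : graphLap w μ f x ≤ 0) {c : ℝ} {y : V} (hxy : 0 < w x y)
    (hc : (∑ z, w x z) / w x y ≤ c) : f y ≤ c * f x := by
  refine le_of_mul_le_mul_left ?_ hxy
  calc w x y * f y ≤ ∑ z, w x z * f z :=
        single_le_sum (f := fun z => w x z * f z) (fun z _ => mul_nonneg (hw z) (hf z))
          (mem_univ y)
    _ ≤ (∑ z, w x z) * f x := sum_mul_le_degree_mul hμ hΔ
    _ ≤ c * w x y * f x := mul_le_mul_of_nonneg_right ((div_le_iff₀ hxy).1 hc) (hf x)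
    _ = w x y * (c * f x) := by ring

lemma sum_mul_sq_le_of_graphLap_nonpos (hw : ∀ y, 0 ≤ w x y) (hμ : 0 < μ x) {f : V → ℝ}
    (hf : ∀ y, 0 ≤ f y) (hΔ : graphLap w μ f x ≤ 0) {c : ℝ} (hc₀ : 0 ≤ c)
    (hc : ∀ y, 0 < w x y → (∑ z, w x z) / w x y ≤ c) :
    (1 / μ x) * ∑ y, w x y * f y ^ 2 ≤ c * ((∑ y, w x y) / μ x) * f x ^ 2 := by
  have hfx := hf x
  have hterm (y : V) : w x y * f y ^ 2 ≤ w x y * f y * (c * f x) := by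
    rcases (hw y).eq_or_lt with h | h
    · simp [← h]
    · rw [sq, ← mul_assoc]
      exact mul_le_mul_of_nonneg_left (le_mul_of_graphLap_nonpos hw hμ hf hΔ h (hc y h))
        (mul_nonneg h.le (hf y))
  calc (1 / μ x) * ∑ y, w x y * f y ^ 2
      ≤ (1 / μ x) * ∑ y, w x y * f y * (c * f x) :=
        mul_le_mul_of_nonneg_left (sum_le_sum fun y _ => hterm y) (by positivity)
    _ = (1 / μ x) * ((∑ y, w x y * f y) * (c * f x)) := by rw [sum_mul]
    _ ≤ (1 / μ x) * ((∑ y, w x y) * f x * (c * f x)) := by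
        gcongr
        exact sum_mul_le_degree_mul hμ hΔ
    _ = c * ((∑ y, w x y) / μ x) * f x ^ 2 := by ring

lemma hasDerivAt_graphLap {F : V → ℝ → ℝ} {F' : V → ℝ} {s : ℝ}
    (hF : ∀ z, HasDerivAt (F z) (F' z) s) (x : V) :
    HasDerivAt (fun r => graphLap w μ (fun z => F z r) x) (graphLap w μ F' x) s :=
  (HasDerivAt.fun_sum fun y _ => ((hF y).sub (hF x)).const_mul (w x y)).const_mul _

lemma hasDerivAt_graphGamma_self {F : V → ℝ → ℝ} {F' : V → ℝ} {s : ℝ}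
    (hF : ∀ z, HasDerivAt (F z) (F' z) s) (x : V) :
    HasDerivAt (fun r => graphGamma w μ (fun z => F z r) (fun z => F z r) x)
      (2 * graphGamma w μ (fun z => F z s) F' x) s := by
  have hterm (y : V) : HasDerivAt (fun r => w x y * (F y r - F x r) * (F y r - F x r))
      (2 * (w x y * (F y s - F x s) * (F' y - F' x))) s := by
    have hd := (hF y).fun_sub (hF x)
    exact ((hd.const_mul (w x y)).mul hd).congr_deriv (by ring)
  refine ((HasDerivAt.fun_sum fun y (_ : y ∈ univ) => hterm y).const_mul
    (1 / (2 * μ x))).congr_deriv ?_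
  rw [graphGamma, ← mul_sum]
  ring

end Calculus

section VertexBump

variable {V : Type*} [DecidableEq V] {w : V → V → ℝ} {μ : V → ℝ} {x y : V}

/-- The function with value `2` at `x` and `1` elsewhere, which tests the curvature condition
against the degree of `x`. -/
def vertexBump (x : V) (z : V) : ℝ := if z = x then 2 else 1

lemma vertexBump_self (x : V) : vertexBump x x = 2 := if_pos rfl

lemma vertexBump_of_ne (h : y ≠ x) : vertexBump x y = 1 := if_neg h

lemma vertexBump_pos (x z : V) : 0 < vertexBump x z := by
  unfold vertexBump
  split_ifs <;> norm_num

lemma vertexBump_sub_self (hloop : w x x = 0) (z : V) :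
    w x z * (vertexBump x z - vertexBump x x) = -w x z := by
  rcases eq_or_ne z x with rfl | h
  · simp [hloop]
  · rw [vertexBump_self, vertexBump_of_ne h]
    ring

variable [Fintype V]

lemma graphLap_vertexBump_self (hloop : w x x = 0) :
    graphLap w μ (vertexBump x) x = -((∑ z, w x z) / μ x) := by
  simp only [graphLap, vertexBump_sub_self hloop, sum_neg_distrib]
  ring

lemma graphGamma_vertexBump_self (hloop : w x x = 0) :
    graphGamma w μ (vertexBump x) (vertexBump x) x = (∑ z, w x z) / μ x / 2 := by
  have hterm (z : V) : w x z * (vertexBump x z - vertexBump x x)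
      * (vertexBump x z - vertexBump x x) = w x z := by
    rw [vertexBump_sub_self hloop, neg_mul, vertexBump_sub_self hloop, neg_neg]
  simp only [graphGamma, hterm]
  ring

lemma graphLap_vertexBump_of_ne (h : y ≠ x) :
    graphLap w μ (vertexBump x) y = w y x / μ y := by
  rw [graphLap,
    Fintype.sum_eq_single x fun z hz => by simp [vertexBump_of_ne h, vertexBump_of_ne hz],
    vertexBump_self, vertexBump_of_ne h]
  ring

lemma graphGamma_vertexBump_of_ne (h : y ≠ x) :
    graphGamma w μ (vertexBump x) (vertexBump x) y = w y x / μ y / 2 := by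
  rw [graphGamma,
    Fintype.sum_eq_single x fun z hz => by simp [vertexBump_of_ne h, vertexBump_of_ne hz],
    vertexBump_self, vertexBump_of_ne h]
  ring

lemma graphGamma2Tilde_vertexBump (hloop : w x x = 0) :
    graphGamma2Tilde w μ (vertexBump x) x
      = (1 / (2 * μ x)) * ∑ y, w x y * (2 * (w y x / μ y) + (∑ z, w x z) / μ x / 4) := by
  rw [graphGamma2Tilde_eq_sum]
  congr 1
  refine sum_congr rfl fun y _ => ?_
  rcases eq_or_ne y x with rfl | h
  · simp [hloop]
  · rw [graphLap_vertexBump_self hloop, graphGamma_vertexBump_self hloop,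
      graphLap_vertexBump_of_ne h, graphGamma_vertexBump_of_ne h, vertexBump_self,
      vertexBump_of_ne h]
    ring

end VertexBump

section DegreeBound

variable {V : Type*} [Fintype V] {w : V → V → ℝ} {μ : V → ℝ} {x : V}

lemma CDEneg.degree_le {n K D : ℝ} (hCDE : CDEneg w μ n K) (hn : 0 < n)
    (hw : ∀ x y, 0 ≤ w x y) (hloop : w x x = 0) (hμ : ∀ x, 0 < μ x)
    (hD : ∀ y, (∑ z, w y z) / μ y ≤ D) (hd : 0 < (∑ z, w x z) / μ x) :
    (∑ z, w x z) / μ x ≤ n * (9 / 8 * D + K / 2) := by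
  classical
  have hcde := hCDE x (vertexBump x) (vertexBump_pos x)
    (by rw [graphLap_vertexBump_self hloop]; linarith)
  rw [graphGamma2Tilde_vertexBump hloop, graphLap_vertexBump_self hloop,
    graphGamma_vertexBump_self hloop] at hcde
  have hμx := hμ x
  have hwD (y : V) : w y x / μ y ≤ D := (hD y).trans' <|
    div_le_div_of_nonneg_right (single_le_sum (fun z _ => hw y z) (mem_univ x)) (hμ y).le
  have hsum : (1 / (2 * μ x)) * ∑ y, w x y * (2 * (w y x / μ y) + (∑ z, w x z) / μ x / 4)
      ≤ (1 / (2 * μ x)) * ∑ y, w x y * (9 / 4 * D) := by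
    gcongr with y
    · exact hw x y
    · linarith [hwD y, hD x]
  have hsum_eq : (1 / (2 * μ x)) * ∑ y, w x y * (9 / 4 * D)
      = (∑ z, w x z) / μ x * (9 / 8 * D) := by
    rw [← sum_mul]
    ring
  generalize (∑ z, w x z) / μ x = d at *
  refine le_of_mul_le_mul_left ?_ hd
  calc d * d = n * ((1 / n) * (-d) ^ 2 - K * (d / 2)) + n * (K * (d / 2)) := by
        field_simp
        ring
    _ ≤ n * (d * (9 / 8 * D)) + n * (K * (d / 2)) := by gcongr; linarith
    _ = d * (n * (9 / 8 * D + K / 2)) := by ring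

end DegreeBound

section LiYauQuotient

variable {V : Type*} [Fintype V] {w : V → V → ℝ} {μ : V → ℝ} {α : ℝ} {x : V}

/-- The Li-Yau expression `(1 - α) Γ(f) - Δ(f²) / 2`; for `f = √u` with `u` a solution of the heat
equation, the second term is `∂ₜu / 2`. -/
noncomputable def liYauForm (w : V → V → ℝ) (μ : V → ℝ) (α : ℝ) (f : V → ℝ) (x : V) : ℝ :=
  (1 - α) * graphGamma w μ f f x - 1 / 2 * graphLap w μ (fun z => f z ^ 2) x

/-- The derivative of `liYauForm` at `f` in the direction `g`. -/
noncomputable def liYauFormDeriv (w : V → V → ℝ) (μ : V → ℝ) (α : ℝ) (f g : V → ℝ) (x : V) : ℝ :=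
  (1 - α) * (2 * graphGamma w μ f g x) - graphLap w μ (fun z => f z * g z) x

/-- The Li-Yau expression normalized by `f²`, the quantity to which the maximum principle is
applied. -/
noncomputable def liYauQuotient (w : V → V → ℝ) (μ : V → ℝ) (α : ℝ) (f : V → ℝ) (x : V) : ℝ :=
  liYauForm w μ α f x / f x ^ 2

lemma liYauForm_eq_neg (f : V → ℝ) :
    liYauForm w μ α f x = -(α * graphGamma w μ f f x + f x * graphLap w μ f x) := by
  rw [liYauForm, graphLap_sq]
  ring

lemma liYauForm_eq_quotient_mul {f : V → ℝ} (hf : f x ≠ 0) :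
    liYauForm w μ α f x = liYauQuotient w μ α f x * f x ^ 2 := by
  rw [liYauQuotient, div_mul_cancel₀ _ (pow_ne_zero 2 hf)]

lemma liYauQuotient_le_degree (hw : ∀ y, 0 ≤ w x y) (hμ : 0 ≤ μ x) (hα : 0 ≤ α) {f : V → ℝ}
    (hf : ∀ y, 0 < f y) : liYauQuotient w μ α f x ≤ (∑ y, w x y) / μ x := by
  have hfx := hf x
  have hΓ := mul_nonneg hα (graphGamma_self_nonneg hw hμ f)
  rw [liYauQuotient, div_le_iff₀ (by positivity), liYauForm_eq_neg]
  calc -(α * graphGamma w μ f f x + f x * graphLap w μ f x)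
      ≤ f x * -graphLap w μ f x := by linarith
    _ ≤ f x * ((∑ y, w x y) / μ x * f x) := by
        gcongr
        exact neg_graphLap_le_degree_mul hw hμ fun y => (hf y).le
    _ = (∑ y, w x y) / μ x * f x ^ 2 := by ring

lemma graphLap_neg_of_liYauForm_pos (hw : ∀ y, 0 ≤ w x y) (hμ : 0 ≤ μ x) (hα : 0 ≤ α)
    {f : V → ℝ} (hf : 0 ≤ f x) (h : 0 < liYauForm w μ α f x) : graphLap w μ f x < 0 := by
  have hΓ := mul_nonneg hα (graphGamma_self_nonneg hw hμ f)
  rw [liYauForm_eq_neg] at h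
  exact neg_of_mul_neg_right (by linarith) hf

lemma hasDerivAt_liYauForm {F : V → ℝ → ℝ} {F' : V → ℝ} {s : ℝ}
    (hF : ∀ z, HasDerivAt (F z) (F' z) s) (x : V) :
    HasDerivAt (fun r => liYauForm w μ α (fun z => F z r) x)
      (liYauFormDeriv w μ α (fun z => F z s) F' x) s := by
  have hsq (z : V) : HasDerivAt (fun r => F z r ^ 2) (2 * (F z s * F' z)) s :=
    ((hF z).fun_pow 2).congr_deriv (by push_cast; ring)
  refine (((hasDerivAt_graphGamma_self hF x).const_mul (1 - α)).sub
    ((hasDerivAt_graphLap hsq x).const_mul (1 / 2))).congr_deriv ?_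
  rw [graphLap_const_mul, liYauFormDeriv]
  ring

lemma hasDerivAt_liYauQuotient {F : V → ℝ → ℝ} {F' : V → ℝ} {s : ℝ}
    (hF : ∀ z, HasDerivAt (F z) (F' z) s) (x : V) (hx : F x s ≠ 0) :
    HasDerivAt (fun r => liYauQuotient w μ α (fun z => F z r) x)
      ((liYauFormDeriv w μ α (fun z => F z s) F' x
        - liYauQuotient w μ α (fun z => F z s) x * (2 * F x s * F' x)) / F x s ^ 2) s := by
  refine ((hasDerivAt_liYauForm hF x).fun_div ((hF x).fun_pow 2)
    (pow_ne_zero 2 hx)).congr_deriv ?_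
  rw [liYauForm_eq_quotient_mul (f := fun z => F z s) hx]
  push_cast
  field_simp

/-- Along the heat equation for `f²`, the heat operator applied to the Li-Yau expression is
exactly the modified iterated gradient form that the curvature condition controls. -/
lemma graphLap_liYauForm {f g : V → ℝ} (hf : ∀ z, f z ≠ 0)
    (hx : graphLap w μ (fun z => f z ^ 2) x = 2 * f x * g x)
    (hy : ∀ y, w x y ≠ 0 → graphLap w μ (fun z => f z ^ 2) y = 2 * f y * g y) :
    graphLap w μ (liYauForm w μ α f) x
      = liYauFormDeriv w μ α f g x + 2 * (1 - α) * graphGamma2Tilde w μ f x := by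
  have hg (z : V) (hz : graphLap w μ (fun z => f z ^ 2) z = 2 * f z * g z) :
      g z = graphLap w μ f z + graphGamma w μ f f z / f z := by
    have := hf z
    rw [graphLap_sq] at hz
    field_simp
    linarith
  have hΓ : graphGamma w μ f g x = graphGamma w μ f (graphLap w μ f) x
      + graphGamma w μ f (fun z => graphGamma w μ f f z / f z) x := by
    rw [← graphGamma_add_right]
    exact graphGamma_congr_right f (hg x hx) fun y h => hg y (hy y h)
  have hΔ : graphLap w μ (fun z => graphLap w μ (fun z => f z ^ 2) z) x
      = 2 * graphLap w μ (fun z => f z * g z) x := by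
    rw [← graphLap_const_mul]
    exact graphLap_congr (by rw [hx, mul_assoc]) fun y h => by rw [hy y h, mul_assoc]
  calc graphLap w μ (liYauForm w μ α f) x
      = (1 - α) * graphLap w μ (graphGamma w μ f f) x
        - 1 / 2 * graphLap w μ (fun z => graphLap w μ (fun z => f z ^ 2) z) x := by
        rw [← graphLap_const_mul, ← graphLap_const_mul, ← graphLap_sub]
        rfl
    _ = liYauFormDeriv w μ α f g x + 2 * (1 - α) * graphGamma2Tilde w μ f x := by
        rw [hΔ, liYauFormDeriv, hΓ, graphGamma2Tilde, graphGamma2]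
        ring

lemma CDEneg.liYauForm_sq_le {n K : ℝ} (hCDE : CDEneg w μ n K) (hn : 0 < n)
    (hw : ∀ y, 0 ≤ w x y) (hμ : 0 ≤ μ x) (hα : 0 ≤ α) {f : V → ℝ} (hf : ∀ z, 0 < f z)
    (hpos : 0 < liYauForm w μ α f x) (hK : K * n * f x ^ 2 ≤ 2 * α * liYauForm w μ α f x) :
    liYauForm w μ α f x ^ 2 ≤ n * f x ^ 2 * graphGamma2Tilde w μ f x := by
  have hΓ := graphGamma_self_nonneg hw hμ f
  have hcde := hCDE x f hf (graphLap_neg_of_liYauForm_pos hw hμ hα (hf x).le hpos)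
  have hP := liYauForm_eq_neg (w := w) (μ := μ) (α := α) (x := x) f
  generalize liYauForm w μ α f x = P at *
  have hΔ : f x * graphLap w μ f x = -(P + α * graphGamma w μ f f x) := by linarith
  calc P ^ 2 ≤ (P + α * graphGamma w μ f f x) ^ 2 - 2 * α * P * graphGamma w μ f f x := by
        linarith [sq_nonneg (α * graphGamma w μ f f x)]
    _ ≤ (P + α * graphGamma w μ f f x) ^ 2 - K * n * f x ^ 2 * graphGamma w μ f f x := by gcongr
    _ = (f x * graphLap w μ f x) ^ 2 - K * n * f x ^ 2 * graphGamma w μ f f x := by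
        rw [hΔ, neg_sq]
    _ = n * f x ^ 2 * (1 / n * graphLap w μ f x ^ 2 - K * graphGamma w μ f f x) := by
        field_simp
    _ ≤ n * f x ^ 2 * graphGamma2Tilde w μ f x := by gcongr

end LiYauQuotient

section Cutoff

/-- The radial cutoff equal to `1` for `r ≤ R`, to `0` for `2 * R ≤ r`, and affine in between. -/
noncomputable def radialCutoff (R r : ℝ) : ℝ := max 0 (min 1 (2 - r / R))

variable {R r r' : ℝ}

lemma radialCutoff_nonneg : 0 ≤ radialCutoff R r := le_max_left _ _

lemma radialCutoff_le_one : radialCutoff R r ≤ 1 := max_le zero_le_one (min_le_left _ _)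

lemma radialCutoff_eq_one (hR : 0 < R) (h : r ≤ R) : radialCutoff R r = 1 := by
  have : r / R ≤ 1 := (div_le_one hR).2 h
  rw [radialCutoff, min_eq_left (by linarith), max_eq_right zero_le_one]

lemma radialCutoff_le_add (hR : 0 < R) (h : r' ≤ r + 1) :
    radialCutoff R r ≤ radialCutoff R r' + 1 / R := by
  have hdiv : r' / R ≤ r / R + 1 / R := by
    rw [← add_div]
    gcongr
  have hR' : 0 < 1 / R := by positivity
  unfold radialCutoff
  grind

lemma add_two_lt_of_lt_radialCutoff (hR : 0 < R) (h : 2 / R < radialCutoff R r) :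
    r + 2 < 2 * R := by
  have hR' : 0 < 2 / R := by positivity
  have hlt : 2 / R < 2 - r / R := by
    unfold radialCutoff at h
    grind
  rwa [lt_sub_iff_add_lt, ← add_div, div_lt_iff₀ hR, add_comm] at hlt

end Cutoff

section MaximumPrinciple

lemma hasDerivAt_nonneg_of_forall_Icc_le {g : ℝ → ℝ} {g' a b : ℝ} (hab : a < b)
    (hg : HasDerivAt g g' b) (hmax : ∀ s ∈ Set.Icc a b, g s ≤ g b) : 0 ≤ g' := by
  have hloc : IsLocalMaxOn g (Set.Icc a b) b := IsMaxOn.localize hmax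
  have h := hloc.hasFDerivWithinAt_nonpos hg.hasFDerivAt.hasFDerivWithinAt
    (sub_mem_posTangentConeAt_of_segment_subset (segment_symm ℝ b a ▸ segment_subset_Icc hab.le))
  simp only [ContinuousLinearMap.toSpanSingleton_apply, smul_eq_mul] at h
  exact nonneg_of_mul_nonpos_right h (sub_neg.2 hab)

lemma exists_forall_le_of_continuousOn_Icc {ι : Type*} [Finite ι] [Nonempty ι] {F : ι → ℝ → ℝ}
    {a b : ℝ} (hab : a ≤ b) (hF : ∀ i, ContinuousOn (F i) (Set.Icc a b)) :
    ∃ i, ∃ s ∈ Set.Icc a b, ∀ j, ∀ r ∈ Set.Icc a b, F j r ≤ F i s := by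
  choose s hs hmax using fun i =>
    isCompact_Icc.exists_isMaxOn (Set.nonempty_Icc.2 hab) (hF i)
  obtain ⟨i, hi⟩ := Finite.exists_max fun i => F i (s i)
  exact ⟨i, s i, hs i, fun j r hr => (hmax j hr).trans (hi j)⟩

lemma sub_le_mul_of_mul_le_mul_of_le_add {a b p q δ : ℝ} (ha : 0 ≤ a) (hp : 0 < p) (hδ₀ : 0 ≤ δ)
    (hδ : 2 * δ ≤ p) (hpq : p ≤ q + δ) (hmax : b * q ≤ a * p) : b - a ≤ a * (2 * δ / p) := by
  rcases le_total b a with hba | hab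
  · exact (sub_nonpos.2 hba).trans (by positivity)
  · rw [← mul_div_assoc, le_div_iff₀ hp]
    calc (b - a) * p ≤ (b - a) * (2 * q) :=
          mul_le_mul_of_nonneg_left (by linarith) (sub_nonneg.2 hab)
      _ ≤ 2 * (a * (p - q)) := by linarith
      _ ≤ 2 * (a * δ) := by gcongr; linarith
      _ = a * (2 * δ) := by ring

variable {V : Type*} [Fintype V] {w : V → V → ℝ} {μ : V → ℝ} {α : ℝ} {x : V}

lemma graphLap_mul_sq_le_of_max (hw : ∀ y, 0 ≤ w x y) (hμ : 0 ≤ μ x) {h φ : V → ℝ} {δ : ℝ}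
    (f : V → ℝ) (hx : 0 ≤ h x) (hφx : 0 < φ x) (hδ₀ : 0 ≤ δ) (hδ : 2 * δ ≤ φ x)
    (hφ : ∀ y, 0 < w x y → φ x ≤ φ y + δ) (hmax : ∀ y, 0 < w x y → h y * φ y ≤ h x * φ x) :
    graphLap w μ (fun z => h z * f z ^ 2) x ≤ h x * graphLap w μ (fun z => f z ^ 2) x
      + h x * (2 * δ / φ x) * ((1 / μ x) * ∑ y, w x y * f y ^ 2) := by
  have hterm (y : V) : w x y * ((h y - h x) * f y ^ 2)
      ≤ h x * (2 * δ / φ x) * (w x y * f y ^ 2) := by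
    rcases (hw y).eq_or_lt with hxy | hxy
    · simp [← hxy]
    · calc w x y * ((h y - h x) * f y ^ 2)
          ≤ w x y * (h x * (2 * δ / φ x) * f y ^ 2) := by
            gcongr
            exact sub_le_mul_of_mul_le_mul_of_le_add hx hφx hδ₀ hδ (hφ y hxy) (hmax y hxy)
        _ = h x * (2 * δ / φ x) * (w x y * f y ^ 2) := by ring
  rw [← sub_le_iff_le_add', graphLap_mul_sub]
  calc (1 / μ x) * ∑ y, w x y * ((h y - h x) * f y ^ 2)
      ≤ (1 / μ x) * ∑ y, h x * (2 * δ / φ x) * (w x y * f y ^ 2) :=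
        mul_le_mul_of_nonneg_left (sum_le_sum fun y _ => hterm y) (by positivity)
    _ = h x * (2 * δ / φ x) * ((1 / μ x) * ∑ y, w x y * f y ^ 2) := by
        rw [← mul_sum]
        ring

lemma graphLap_liYauForm_le_of_max {c δ : ℝ} (hw : ∀ y, 0 ≤ w x y) (hμ : 0 < μ x) (hα : 0 ≤ α)
    {f φ : V → ℝ} (hf : ∀ z, 0 < f z) (hpos : 0 < liYauQuotient w μ α f x)
    (hc₀ : 0 ≤ c) (hc : ∀ y, 0 < w x y → (∑ z, w x z) / w x y ≤ c)
    (hφx : 0 < φ x) (hδ₀ : 0 ≤ δ) (hδ : 2 * δ ≤ φ x) (hφ : ∀ y, 0 < w x y → φ x ≤ φ y + δ)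
    (hmax : ∀ y, 0 < w x y →
      liYauQuotient w μ α f y * φ y ≤ liYauQuotient w μ α f x * φ x) :
    graphLap w μ (liYauForm w μ α f) x
      ≤ liYauQuotient w μ α f x * graphLap w μ (fun z => f z ^ 2) x
        + liYauForm w μ α f x * (2 * δ / φ x * (c * ((∑ y, w x y) / μ x))) := by
  have hfx := hf x
  have hP (z : V) := liYauForm_eq_quotient_mul (w := w) (μ := μ) (α := α) (hf z).ne'
  have hPpos : 0 < liYauForm w μ α f x := by
    rw [hP]
    positivity
  have hmoment := sum_mul_sq_le_of_graphLap_nonpos hw hμ (fun y => (hf y).le)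
    (graphLap_neg_of_liYauForm_pos hw hμ.le hα hfx.le hPpos).le hc₀ hc
  calc graphLap w μ (liYauForm w μ α f) x
      ≤ liYauQuotient w μ α f x * graphLap w μ (fun z => f z ^ 2) x
        + liYauQuotient w μ α f x * (2 * δ / φ x) * ((1 / μ x) * ∑ y, w x y * f y ^ 2) := by
        rw [funext hP]
        exact graphLap_mul_sq_le_of_max hw hμ.le f hpos.le hφx hδ₀ hδ hφ hmax
    _ ≤ liYauQuotient w μ α f x * graphLap w μ (fun z => f z ^ 2) x
        + liYauQuotient w μ α f x * (2 * δ / φ x)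
          * (c * ((∑ y, w x y) / μ x) * f x ^ 2) := by gcongr
    _ = _ := by
        rw [hP]
        ring

lemma neg_mul_div_le_of_nonneg_add {Q q E τ : ℝ} (hτ : 0 < τ) (hq : 0 < q)
    (h : 0 ≤ Q + τ * (E / q)) : -(Q * q / τ) ≤ E := by
  have h' : 0 ≤ (Q + τ * (E / q)) * (q / τ) := by positivity
  have heq : (Q + τ * (E / q)) * (q / τ) = Q * q / τ + E := by field_simp
  linarith

lemma CDEneg.liYauQuotient_le_of_max {n K c δ τ : ℝ} (hCDE : CDEneg w μ n K) (hn : 0 < n)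
    (hw : ∀ y, 0 ≤ w x y) (hμ : 0 < μ x) (hα : 0 ≤ α) (hα1 : α < 1) {f g φ : V → ℝ}
    (hf : ∀ z, 0 < f z)
    (hx : graphLap w μ (fun z => f z ^ 2) x = 2 * f x * g x)
    (hy : ∀ y, w x y ≠ 0 → graphLap w μ (fun z => f z ^ 2) y = 2 * f y * g y)
    (hpos : 0 < liYauQuotient w μ α f x) (hK : K * n ≤ 2 * α * liYauQuotient w μ α f x)
    (hc₀ : 0 ≤ c) (hc : ∀ y, 0 < w x y → (∑ z, w x z) / w x y ≤ c)
    (hφx : 0 < φ x) (hδ₀ : 0 ≤ δ) (hδ : 2 * δ ≤ φ x) (hφ : ∀ y, 0 < w x y → φ x ≤ φ y + δ)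
    (hmax : ∀ y, 0 < w x y →
      liYauQuotient w μ α f y * φ y ≤ liYauQuotient w μ α f x * φ x)
    (hτ : 0 < τ)
    (htime : 0 ≤ liYauQuotient w μ α f x + τ * ((liYauFormDeriv w μ α f g x
      - liYauQuotient w μ α f x * (2 * f x * g x)) / f x ^ 2)) :
    liYauQuotient w μ α f x
      ≤ n / (2 * (1 - α)) * (1 / τ + 2 * δ / φ x * (c * ((∑ y, w x y) / μ x))) := by
  have hfx := hf x
  have : 0 < 1 - α := sub_pos.2 hα1
  have hspace := graphLap_liYauForm_le_of_max hw hμ hα hf hpos hc₀ hc hφx hδ₀ hδ hφ hmax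
  rw [graphLap_liYauForm (fun z => (hf z).ne') hx hy, hx] at hspace
  have hdrift := neg_mul_div_le_of_nonneg_add hτ (by positivity) htime
  have hP := liYauForm_eq_quotient_mul (w := w) (μ := μ) (α := α) hfx.ne'
  rw [← hP] at hdrift
  have hPpos : 0 < liYauForm w μ α f x := by
    rw [hP]
    positivity
  have hcde := hCDE.liYauForm_sq_le hn hw hμ.le hα hf hPpos <| by
    rw [hP, ← mul_assoc]
    gcongr
  set P := liYauForm w μ α f x
  set B := 2 * δ / φ x * (c * ((∑ y, w x y) / μ x))
  rw [div_mul_eq_mul_div, le_div_iff₀ (by positivity)]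
  refine le_of_mul_le_mul_left ?_ (show 0 < P * f x ^ 2 by positivity)
  calc P * f x ^ 2 * (liYauQuotient w μ α f x * (2 * (1 - α)))
      = 2 * (1 - α) * P ^ 2 := by
        rw [sq P]
        nth_rw 3 [hP]
        ring
    _ ≤ 2 * (1 - α) * (n * f x ^ 2 * graphGamma2Tilde w μ f x) := by gcongr
    _ = n * f x ^ 2 * (2 * (1 - α) * graphGamma2Tilde w μ f x) := by ring
    _ ≤ n * f x ^ 2 * (P / τ + P * B) := by
        gcongr
        linarith
    _ = P * f x ^ 2 * (n * (1 / τ + B)) := by ring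

end MaximumPrinciple

section LiYauBound

/-- The second argument of the minimum in the Li-Yau inequality, with `c` in the role of `D_w`. -/
noncomputable def liYauBound (n K α c D R t : ℝ) : ℝ :=
  n / ((1 - α) * 2 * t) + n * (2 + c) * D / ((1 - α) * R) + K * n / (2 * α)

variable {n K α c D R t : ℝ}

lemma liYauBound_pos (hn : 0 < n) (hK : 0 ≤ K) (hα : 0 < α) (hα1 : α < 1) (hc : 0 ≤ c)
    (hD : 0 ≤ D) (hR : 0 < R) (ht : 0 < t) : 0 < liYauBound n K α c D R t := by
  have : 0 < 1 - α := sub_pos.2 hα1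
  unfold liYauBound
  positivity

lemma mul_div_two_mul_le_liYauBound (hn : 0 ≤ n) (hα1 : α ≤ 1) (hc : 0 ≤ c) (hD : 0 ≤ D)
    (hR : 0 ≤ R) (ht : 0 ≤ t) : K * n / (2 * α) ≤ liYauBound n K α c D R t := by
  have : 0 ≤ 1 - α := sub_nonneg.2 hα1
  exact le_add_of_nonneg_left (by positivity)

lemma mul_degree_bound_le_liYauBound {p : ℝ} (hn : 0 ≤ n) (hK : 0 ≤ K) (hα : 0 < α) (hα1 : α < 1)
    (hc : 1 ≤ c) (hD : 0 ≤ D) (hR : 0 < R) (ht : 0 ≤ t) (hp1 : p ≤ 1) (hpR : p ≤ 2 / R) :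
    p * (n * (9 / 8 * D + K / 2)) ≤ liYauBound n K α c D R t := by
  have : 0 < 1 - α := sub_pos.2 hα1
  have hdegree : 2 / R * (9 / 8 * (n * D)) ≤ n * (2 + c) * D / ((1 - α) * R) := by
    rw [div_mul_eq_mul_div]
    apply div_le_div₀ (by positivity) _ (by positivity) (mul_le_of_le_one_left hR.le (by linarith))
    calc 2 * (9 / 8 * (n * D)) ≤ (2 + c) * (n * D) := by
          rw [← mul_assoc]
          gcongr
          linarith
      _ = n * (2 + c) * D := by ring
  have hcurvature : K * n / 2 ≤ K * n / (2 * α) := by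
    gcongr
    linarith
  calc p * (n * (9 / 8 * D + K / 2))
      = p * (9 / 8 * (n * D)) + p * (K * n / 2) := by ring
    _ ≤ 2 / R * (9 / 8 * (n * D)) + 1 * (K * n / 2) := by gcongr
    _ ≤ n * (2 + c) * D / ((1 - α) * R) + K * n / (2 * α) := by
        rw [one_mul]
        exact add_le_add hdegree hcurvature
    _ ≤ liYauBound n K α c D R t := by
        rw [liYauBound, add_assoc]
        exact le_add_of_nonneg_left (by positivity)

lemma mul_mul_le_mul_liYauBound {p q d τ : ℝ} (hn : 0 < n) (hK : 0 ≤ K) (hα : 0 < α) (hα1 : α < 1)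
    (hc : 0 ≤ c) (hd : 0 ≤ d) (hdD : d ≤ D) (hR : 0 < R) (hτ : 0 < τ) (hτt : τ ≤ t)
    (hp : 0 < p) (hp1 : p ≤ 1)
    (hq : q ≤ n / (2 * (1 - α)) * (1 / τ + 2 * (1 / R) / p * (c * d))) :
    τ * (p * q) ≤ t * liYauBound n K α c D R t := by
  have : 0 < 1 - α := sub_pos.2 hα1
  have ht : 0 < t := hτ.trans_le hτt
  have hD : 0 ≤ D := hd.trans hdD
  calc τ * (p * q)
      ≤ τ * (p * (n / (2 * (1 - α)) * (1 / τ + 2 * (1 / R) / p * (c * d)))) := by gcongr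
    _ = n / (2 * (1 - α)) * (p + τ * (2 / R * (c * d))) := by field_simp
    _ ≤ n / (2 * (1 - α)) * (1 + t * (2 / R * (c * D))) := by gcongr
    _ = t * (n / ((1 - α) * 2 * t) + n * c * D / ((1 - α) * R)) := by field_simp
    _ ≤ t * (n / ((1 - α) * 2 * t) + n * (2 + c) * D / ((1 - α) * R)) := by
        gcongr
        linarith
    _ ≤ t * liYauBound n K α c D R t := by
        gcongr
        exact le_add_of_nonneg_right (by positivity)

end LiYauBound

section BallEstimate

variable {V : Type*} [Fintype V] {w : V → V → ℝ} {μ : V → ℝ} {α T : ℝ} {U : Set V}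
  {f f' : V → ℝ → ℝ}

/-- The function `f` is the square root of a positive function that solves the heat equation at the
vertices in `U` during the time interval `(0, T]`; the time derivative `f'` of `f` is part of the
data. -/
structure IsSqrtHeatSolution (w : V → V → ℝ) (μ : V → ℝ) (T : ℝ) (U : Set V)
    (f f' : V → ℝ → ℝ) : Prop where
  pos : ∀ z, ∀ s ∈ Set.Ioc 0 T, 0 < f z s
  hasDerivAt : ∀ z, ∀ s ∈ Set.Ioc 0 T, HasDerivAt (f z) (f' z s) s
  heat : ∀ z ∈ U, ∀ s ∈ Set.Ioc 0 T,
    graphLap w μ (fun y => f y s ^ 2) z = 2 * f z s * f' z s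

namespace IsSqrtHeatSolution

lemma hasDerivAt_liYauQuotient (hf : IsSqrtHeatSolution w μ T U f f') {s : ℝ}
    (hs : s ∈ Set.Ioc 0 T) (x : V) :
    HasDerivAt (fun r => liYauQuotient w μ α (fun z => f z r) x)
      ((liYauFormDeriv w μ α (fun z => f z s) (fun z => f' z s) x
        - liYauQuotient w μ α (fun z => f z s) x * (2 * f x s * f' x s)) / f x s ^ 2) s :=
  _root_.hasDerivAt_liYauQuotient (fun z => hf.hasDerivAt z s hs) x (hf.pos x s hs).ne'

lemma exists_forall_mul_liYauQuotient_le [Nonempty V] (hf : IsSqrtHeatSolution w μ T U f f')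
    (φ : V → ℝ) {a : ℝ} (ha : 0 < a) (haT : a ≤ T) :
    ∃ p, ∃ τ ∈ Set.Icc a T, ∀ z, ∀ s ∈ Set.Icc a T,
      s * (φ z * liYauQuotient w μ α (fun y => f y s) z)
        ≤ τ * (φ p * liYauQuotient w μ α (fun y => f y τ) p) := by
  refine exists_forall_le_of_continuousOn_Icc
    (F := fun z s => s * (φ z * liYauQuotient w μ α (fun y => f y s) z)) haT fun z s hs => ?_
  have hQ := (hf.hasDerivAt_liYauQuotient (α := α) ⟨ha.trans_le hs.1, hs.2⟩ z).continuousAt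
  exact (continuousAt_id.mul (hQ.const_mul (φ z))).continuousWithinAt

variable {ρ : V → ℝ} {n K c D R a τ : ℝ} {p : V}

lemma liYauQuotient_le_of_max (hf : IsSqrtHeatSolution w μ T {z | ρ z < 2 * R} f f')
    (hCDE : CDEneg w μ n K) (hn : 0 < n) (hw : ∀ y, 0 ≤ w p y) (hμ : 0 < μ p)
    (hα : 0 ≤ α) (hα1 : α < 1) (hR : 0 < R) (hc₀ : 0 ≤ c)
    (hc : ∀ y, 0 < w p y → (∑ z, w p z) / w p y ≤ c)
    (hρ : ∀ y, 0 < w p y → ρ y ≤ ρ p + 1) (ha : 0 < a) (haτ : a < τ) (hτT : τ ≤ T)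
    (hmax : ∀ z, ∀ s ∈ Set.Icc a T,
      s * (radialCutoff R (ρ z) * liYauQuotient w μ α (fun y => f y s) z)
        ≤ τ * (radialCutoff R (ρ p) * liYauQuotient w μ α (fun y => f y τ) p))
    (hφ : 2 / R < radialCutoff R (ρ p)) (hpos : 0 < liYauQuotient w μ α (fun y => f y τ) p)
    (hK : K * n ≤ 2 * α * liYauQuotient w μ α (fun y => f y τ) p) :
    liYauQuotient w μ α (fun y => f y τ) p
      ≤ n / (2 * (1 - α))
        * (1 / τ + 2 * (1 / R) / radialCutoff R (ρ p) * (c * ((∑ y, w p y) / μ p))) := by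
  have hτ : τ ∈ Set.Ioc 0 T := ⟨ha.trans haτ, hτT⟩
  have hφpos : 0 < radialCutoff R (ρ p) := hφ.trans' (by positivity)
  have hp := add_two_lt_of_lt_radialCutoff hR hφ
  have hpU : p ∈ {z | ρ z < 2 * R} := show ρ p < 2 * R by linarith
  refine hCDE.liYauQuotient_le_of_max hn hw hμ hα hα1 (φ := fun z => radialCutoff R (ρ z))
    (g := fun z => f' z τ) (fun z => hf.pos z τ hτ) (hf.heat p hpU τ hτ)
    (fun y hy => hf.heat y ?_ τ hτ) hpos hK hc₀ hc hφpos (by positivity) ?_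
    (fun y hy => radialCutoff_le_add hR (hρ y hy)) (fun y _ => ?_) hτ.1 ?_
  · have := hρ y ((hw y).lt_of_ne' hy)
    exact show ρ y < 2 * R by linarith
  · rw [mul_one_div]
    exact hφ.le
  · simpa only [mul_comm (radialCutoff _ _)] using
      le_of_mul_le_mul_left (hmax y τ ⟨haτ.le, hτT⟩) hτ.1
  · have hderiv := (hasDerivAt_id τ).mul (hf.hasDerivAt_liYauQuotient (α := α) hτ p)
    simpa using hasDerivAt_nonneg_of_forall_Icc_le haτ hderiv fun s hs => by
      have := hmax p s ⟨hs.1, hs.2.trans hτT⟩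
      rw [mul_left_comm, mul_left_comm τ] at this
      exact le_of_mul_le_mul_left this hφpos

lemma mul_cutoff_mul_liYauQuotient_le_of_max
    (hf : IsSqrtHeatSolution w μ T {z | ρ z < 2 * R} f f')
    (hCDE : CDEneg w μ n K) (hn : 0 < n) (hK : 0 ≤ K)
    (hw : ∀ x y, 0 ≤ w x y) (hloop : w p p = 0) (hμ : ∀ x, 0 < μ x)
    (hα : 0 < α) (hα1 : α < 1) (hR : 0 < R)
    (hc₁ : 1 ≤ c) (hc : ∀ y, 0 < w p y → (∑ z, w p z) / w p y ≤ c)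
    (hD : ∀ z, (∑ y, w z y) / μ z ≤ D)
    (hρ : ∀ y, 0 < w p y → ρ y ≤ ρ p + 1) (ha : 0 < a) (haτ : a < τ) (hτT : τ ≤ T)
    (hmax : ∀ z, ∀ s ∈ Set.Icc a T,
      s * (radialCutoff R (ρ z) * liYauQuotient w μ α (fun y => f y s) z)
        ≤ τ * (radialCutoff R (ρ p) * liYauQuotient w μ α (fun y => f y τ) p)) :
    τ * (radialCutoff R (ρ p) * liYauQuotient w μ α (fun y => f y τ) p)
      ≤ T * liYauBound n K α c D R T := by
  have hτ : 0 < τ := ha.trans haτ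
  have hT : 0 < T := hτ.trans_le hτT
  have hφ₀ : 0 ≤ radialCutoff R (ρ p) := radialCutoff_nonneg
  have hφ₁ : radialCutoff R (ρ p) ≤ 1 := radialCutoff_le_one
  have hd₀ : 0 ≤ (∑ y, w p y) / μ p := div_nonneg (sum_nonneg fun y _ => hw p y) (hμ p).le
  have hD₀ := hd₀.trans (hD p)
  have hE := liYauBound_pos hn hK hα hα1 (zero_le_one.trans hc₁) hD₀ hR hT
  have hQd := liYauQuotient_le_degree (hw p) (hμ p).le hα.le (fun y => hf.pos y τ ⟨hτ, hτT⟩)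
  rcases le_or_gt (liYauQuotient w μ α (fun y => f y τ) p) (K * n / (2 * α)) with hQ | hQ
  · have hQE := hQ.trans <|
      mul_div_two_mul_le_liYauBound hn.le hα1.le (zero_le_one.trans hc₁) hD₀ hR.le hT.le
    refine mul_le_mul_of_nonneg hτT ?_ hτ.le hE.le
    exact (mul_le_mul_of_nonneg_left hQE hφ₀).trans (mul_le_of_le_one_left hE.le hφ₁)
  have hQpos := hQ.trans_le' (by positivity)
  rcases le_or_gt (radialCutoff R (ρ p)) (2 / R) with hφ | hφ
  · have hdegree := hCDE.degree_le hn hw hloop hμ hD (hQpos.trans_le hQd)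
    refine mul_le_mul_of_nonneg hτT ?_ hτ.le hE.le
    exact (mul_le_mul_of_nonneg_left (hQd.trans hdegree) hφ₀).trans <|
      mul_degree_bound_le_liYauBound hn.le hK hα hα1 hc₁ hD₀ hR hT.le hφ₁ hφ
  · refine mul_mul_le_mul_liYauBound hn hK hα hα1 (zero_le_one.trans hc₁) hd₀ (hD p) hR hτ hτT
      (hφ.trans' (by positivity)) hφ₁ ?_
    refine hf.liYauQuotient_le_of_max hCDE hn (hw p) (hμ p) hα.le hα1 hR (zero_le_one.trans hc₁)
      hc hρ ha haτ hτT hmax hφ hQpos ?_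
    rw [mul_comm (2 * α)]
    exact ((div_lt_iff₀ (by positivity)).1 hQ).le

theorem liYauQuotient_le_liYauBound {x : V}
    (hf : IsSqrtHeatSolution w μ T {z | ρ z < 2 * R} f f') (hT : 0 < T)
    (hCDE : CDEneg w μ n K) (hn : 0 < n) (hK : 0 ≤ K)
    (hw : ∀ x y, 0 ≤ w x y) (hloop : ∀ x, w x x = 0) (hμ : ∀ x, 0 < μ x)
    (hα : 0 < α) (hα1 : α < 1) (hR : 0 < R)
    (hc₁ : 1 ≤ c) (hc : ∀ x y, 0 < w x y → (∑ z, w x z) / w x y ≤ c)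
    (hD : ∀ z, (∑ y, w z y) / μ z ≤ D)
    (hρ : ∀ x y, 0 < w x y → ρ y ≤ ρ x + 1) (hx : ρ x ≤ R) :
    liYauQuotient w μ α (fun z => f z T) x ≤ liYauBound n K α c D R T := by
  have hQD (z : V) {s : ℝ} (hs : s ∈ Set.Ioc 0 T) :
      liYauQuotient w μ α (fun y => f y s) z ≤ D :=
    (liYauQuotient_le_degree (hw z) (hμ z).le hα.le fun y => hf.pos y s hs).trans (hD z)
  have hD₀ : 0 ≤ D := (hD x).trans' (div_nonneg (sum_nonneg fun y _ => hw x y) (hμ x).le)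
  have hE := liYauBound_pos hn hK hα hα1 (zero_le_one.trans hc₁) hD₀ hR hT
  by_contra! hlt
  set E := liYauBound n K α c D R T
  have hED : E < D := hlt.trans_le (hQD x ⟨hT, le_rfl⟩)
  have hDpos : 0 < D := hE.trans hED
  -- Before the time `a`, the bound `D` alone keeps the maximized quantity below `T * E`.
  obtain ⟨a, ha, haD⟩ : ∃ a, 0 < a ∧ a * D = T * E :=
    ⟨T * E / D, by positivity, div_mul_cancel₀ _ hDpos.ne'⟩
  have haT : a ≤ T := by
    refine le_of_mul_le_mul_right ?_ hDpos
    rw [haD]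
    gcongr
  have : Nonempty V := ⟨x⟩
  obtain ⟨p, τ, hτ, hmax⟩ :=
    hf.exists_forall_mul_liYauQuotient_le (α := α) (fun z => radialCutoff R (ρ z)) ha haT
  refine (mul_lt_mul_of_pos_left hlt hT).not_ge ?_
  calc T * liYauQuotient w μ α (fun z => f z T) x
      = T * (radialCutoff R (ρ x) * liYauQuotient w μ α (fun z => f z T) x) := by
        rw [radialCutoff_eq_one hR hx, one_mul]
    _ ≤ τ * (radialCutoff R (ρ p) * liYauQuotient w μ α (fun z => f z τ) p) :=
        hmax x T ⟨haT, le_rfl⟩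
    _ ≤ T * E := by
        rcases hτ.1.eq_or_lt with rfl | haτ
        · rw [← haD]
          gcongr
          exact (mul_le_mul_of_nonneg_left (hQD p ⟨ha, haT⟩) radialCutoff_nonneg).trans
            (mul_le_of_le_one_left hD₀ radialCutoff_le_one)
        · exact hf.mul_cutoff_mul_liYauQuotient_le_of_max hCDE hn hK hw (hloop p) hμ hα hα1 hR hc₁
            (hc p) hD (hρ p) ha haτ hτ.2 hmax

end IsSqrtHeatSolution

end BallEstimate

section LiYau

variable {V : Type*} [Fintype V] {w : V → V → ℝ} {μ : V → ℝ}

lemma isSqrtHeatSolution_sqrt {T : ℝ} {U : Set V} {u : V → ℝ → ℝ}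
    (hu : ∀ x, ∀ s ∈ Set.Ioc 0 T, 0 < u x s)
    (hdiff : ∀ x, ∀ s ∈ Set.Ioc 0 T, DifferentiableAt ℝ (u x) s)
    (hheat : ∀ x ∈ U, ∀ s ∈ Set.Ioc 0 T, graphLap w μ (fun z => u z s) x = deriv (u x) s) :
    IsSqrtHeatSolution w μ T U (fun z s => √(u z s))
      (fun z s => deriv (u z) s / (2 * √(u z s))) where
  pos z s hs := Real.sqrt_pos.2 (hu z s hs)
  hasDerivAt z s hs := (hdiff z s hs).hasDerivAt.sqrt (hu z s hs).ne'
  heat z hz s hs := by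
    have hpos := Real.sqrt_pos.2 (hu z s hs)
    simp only [Real.sq_sqrt (hu _ s hs).le]
    rw [hheat z hz s hs]
    field_simp

lemma liYauQuotient_sqrt_eq {α t : ℝ} {u : V → ℝ → ℝ} {x : V} (hu : ∀ z, 0 < u z t)
    (hdiff : DifferentiableAt ℝ (u x) t)
    (hheat : graphLap w μ (fun z => u z t) x = deriv (u x) t) :
    liYauQuotient w μ α (fun z => √(u z t)) x
      = (1 - α) * graphGamma w μ (fun z => √(u z t)) (fun z => √(u z t)) x / u x t
        - deriv (fun s => √(u x s)) t / √(u x t) := by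
  simp only [liYauQuotient, liYauForm, Real.sq_sqrt (hu _).le]
  rw [hheat, (hdiff.hasDerivAt.sqrt (hu x).ne').deriv, sub_div, div_div, mul_assoc,
    Real.mul_self_sqrt (hu x).le]
  ring

lemma one_le_degree_div {x y : V} (hw : ∀ z, 0 ≤ w x z) (hxy : 0 < w x y) :
    1 ≤ (∑ z, w x z) / w x y :=
  (one_le_div hxy).2 (single_le_sum (fun z _ => hw z) (mem_univ y))

end LiYau

theorem li_yau_improved_general {V : Type*} [Fintype V] [Nonempty V]
    (w : V → V → ℝ) (hw : ∀ x y, 0 ≤ w x y) (hloop : ∀ x, w x x = 0)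
    (μ : V → ℝ) (hμ : ∀ x, 0 < μ x)
    (ρ : V → ℝ) (hρ : ∀ x y, 0 < w x y → ρ y ≤ ρ x + 1)
    (n K : ℝ) (hn : 0 < n) (hK : 0 ≤ K) (hCDE : CDEneg w μ n K)
    (R : ℝ) (hR : 0 < R) (t : ℝ) (ht : 0 < t)
    (u : V → ℝ → ℝ) (hu : ∀ x, ∀ s ∈ Set.Ioc 0 t, 0 < u x s)
    (hdiff : ∀ x, ∀ s ∈ Set.Ioc 0 t, DifferentiableAt ℝ (u x) s)
    (hheat : ∀ x, ρ x < 2 * R → ∀ s ∈ Set.Ioc 0 t,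
      graphLap w μ (fun z => u z s) x = deriv (u x) s)
    (Dw Dμ : ℝ)
    (hDw : IsGreatest {r : ℝ | ∃ x y, 0 < w x y ∧ (∑ z, w x z) / w x y = r} Dw)
    (hDμ : Dμ = Finset.univ.sup' Finset.univ_nonempty (fun z => (∑ y, w z y) / μ z))
    (α : ℝ) (hα : 0 < α) (hα1 : α < 1) (x : V) (hx : ρ x ≤ R) :
    (1 - α) * graphGamma w μ (fun z => √(u z t)) (fun z => √(u z t)) x / u x t
      - deriv (fun s => √(u x s)) t / √(u x t)
      ≤ min Dμ (n / ((1 - α) * 2 * t) + n * (2 + Dw) * Dμ / ((1 - α) * R)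
          + K * n / (2 * α)) := by
  have htt : t ∈ Set.Ioc 0 t := ⟨ht, le_rfl⟩
  have hdegree (z : V) : (∑ y, w z y) / μ z ≤ Dμ :=
    hDμ ▸ le_sup' (fun z => (∑ y, w z y) / μ z) (mem_univ z)
  obtain ⟨⟨a, b, hab, habw⟩, hmax⟩ := hDw
  have hDw₁ : 1 ≤ Dw := habw ▸ one_le_degree_div (hw a) hab
  have hf := isSqrtHeatSolution_sqrt hu hdiff (U := {z | ρ z < 2 * R}) hheat
  rw [← liYauQuotient_sqrt_eq (fun z => hu z t htt) (hdiff x t htt) (hheat x (by linarith) t htt)]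
  refine le_min ?_ ?_
  · exact (liYauQuotient_le_degree (hw x) (hμ x).le hα.le fun y => hf.pos y t htt).trans (hdegree x)
  · exact hf.liYauQuotient_le_liYauBound ht hCDE hn hK hw hloop hμ hα hα1 hR hDw₁
      (fun x y h => hmax ⟨x, y, h, rfl⟩) hdegree hρ hx

lemma dist_le_dist_add_one_of_adj {V : Type*} {G : SimpleGraph V} {y z : V} (h : G.Adj y z)
    (x : V) : G.dist x z ≤ G.dist x y + 1 :=
  SimpleGraph.dist_eq_one_iff_adj.2 h ▸ h.reachable.dist_triangle_right x

/-- Improved Li-Yau inequality under `CDE(n,-K)`: for a positive solution of the heat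
equation in `B(x₀, 2R)`, for any `0 < α < 1`, `t > 0` and `x ∈ B(x₀, R)`,
`(1-α)Γ(√u)/u - ∂_t√u/√u ≤ min{D_μ, n/((1-α)2t) + n(2+D_w)D_μ/((1-α)R) + Kn/(2α)}`. -/
theorem li_yau_improved {V : Type*} [Fintype V] [Nonempty V]
    (w : V → V → ℝ) (hw : ∀ x y, 0 ≤ w x y) (hloop : ∀ x, w x x = 0)
    (hsymm : ∀ x y, w x y = w y x)
    (μ : V → ℝ) (hμ : ∀ x, 0 < μ x)
    (G : SimpleGraph V) (hadj : ∀ x y, G.Adj x y ↔ x ≠ y ∧ 0 < w x y)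
    (hconn : G.Connected)
    (n K : ℝ) (hn : 0 < n) (hK : 0 < K) (hCDE : CDEneg w μ n K)
    (R : ℝ) (hR : 1 < R) (x₀ : V)
    (u : V → ℝ → ℝ) (hu : ∀ x t, 0 < u x t)
    (hdiff : ∀ x, Differentiable ℝ (u x))
    (hheat : ∀ x t, 0 < t → (G.dist x₀ x : ℝ) < 2 * R →
      graphLap w μ (fun z => u z t) x = deriv (u x) t)
    (Dw Dμ : ℝ)
    (hDw : IsGreatest {r : ℝ | ∃ x y, 0 < w x y ∧ (∑ z, w x z) / w x y = r} Dw)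
    (hDμ : Dμ = Finset.univ.sup' Finset.univ_nonempty (fun z => (∑ y, w z y) / μ z))
    (α : ℝ) (hα : 0 < α) (hα1 : α < 1) (t : ℝ) (ht : 0 < t)
    (x : V) (hx : (G.dist x₀ x : ℝ) < R) :
    (1 - α) * graphGamma w μ (fun z => Real.sqrt (u z t)) (fun z => Real.sqrt (u z t)) x
        / u x t
      - deriv (fun s => Real.sqrt (u x s)) t / Real.sqrt (u x t)
      ≤ min Dμ (n / ((1 - α) * 2 * t) + n * (2 + Dw) * Dμ / ((1 - α) * R)
          + K * n / (2 * α)) := by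
  have hρ (y z : V) (hyz : 0 < w y z) : (G.dist x₀ z : ℝ) ≤ G.dist x₀ y + 1 := by
    have hne : y ≠ z := fun h => hyz.ne' (h ▸ hloop y)
    exact_mod_cast dist_le_dist_add_one_of_adj ((hadj y z).2 ⟨hne, hyz⟩) x₀
  exact li_yau_improved_general w hw hloop μ hμ (fun z => G.dist x₀ z) hρ n K hn hK.le hCDE R
    (by linarith) t ht u (fun z s _ => hu z s) (fun z s _ => (hdiff z).differentiableAt)
    (fun z hz s hs => hheat z s hs.1 hz) Dw Dμ hDw hDμ α hα hα1 x hx.le
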